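/- Let λ ≥ 2 and n ≥ 1 be integers. Let S be a nonzero rational trigonometric polynomial nonnegative on ℝⁿ and let τ be a rational trigonometric polynomial with τ(0) = 1 satisfying the oblique sub-QMF condition: 1/S(λξ) − Σ_{γ∈Γ} |τ(ξ + γ)|²/S(ξ + γ) ≥ 0 for all ξ at which this expression is defined. Define f_0(ξ) := χ_{[−π,π)ⁿ}(ξ)·S(ξ)^{−1/2} and, for m ≥ 1, f_m(ξ) := χ_{[−λ^m π, λ^m π)ⁿ}(ξ)·S(λ^{−m}ξ)^{−1/2}·Π_{j=1}^{m} τ(λ^{−j}ξ). Then for every m ≥ 0 and all ξ at which both sides are defined, the bracket product satisfies [f_m, f_m](ξ) := Σ_{k∈ℤⁿ} |f_m(ξ + 2πk)|² ≤ 1/S(ξ). -/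

import Mathlib

open MeasureTheory Finset Filter Topology

noncomputable section

/-- `f` is a trigonometric polynomial on ℝⁿ: a finite sum ξ ↦ Σ_{k∈F} h(k) e^{−i k·ξ}. -/
def IsTrigPoly (n : ℕ) (f : (Fin n → ℝ) → ℂ) : Prop :=
  ∃ (F : Finset (Fin n → ℤ)) (h : (Fin n → ℤ) → ℂ),
    ∀ ξ : Fin n → ℝ,
      f ξ = ∑ k ∈ F, h k * Complex.exp (-Complex.I * ∑ i, (k i : ℂ) * (ξ i : ℂ))

/-- Λ = {0,…,λ−1}ⁿ as a finite subset of ℤⁿ. -/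
def Lambda (lam n : ℕ) : Finset (Fin n → ℤ) :=
  Fintype.piFinset fun _ => Finset.Ico (0 : ℤ) (lam : ℤ)

/-- The translate ξ + (2π/λ)·ρ, i.e. ξ + γ for γ = (2π/λ)ρ ∈ Γ. -/
def gshift (lam n : ℕ) (ξ : Fin n → ℝ) (ρ : Fin n → ℤ) : Fin n → ℝ :=
  fun i => ξ i + (2 * Real.pi / lam) * (ρ i : ℝ)

/-- e^{i ν·ξ}. -/
def eI (n : ℕ) (ν : Fin n → ℤ) (ξ : Fin n → ℝ) : ℂ :=
  Complex.exp (Complex.I * ∑ i, (ν i : ℂ) * (ξ i : ℂ))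

/-- The dilate λ·ξ. -/
def dil (lam n : ℕ) (ξ : Fin n → ℝ) : Fin n → ℝ := fun i => (lam : ℝ) * ξ i
/-- A rational trigonometric polynomial: a quotient of two trigonometric polynomials
(with denominator not identically zero).  Its value at ξ (using Lean's total division,
with junk value 0 where the denominator vanishes) is `num ξ / den ξ`; it is *defined*
at ξ precisely when `den ξ ≠ 0`. -/
structure RatTrigPoly (n : ℕ) where
  num : (Fin n → ℝ) → ℂ
  den : (Fin n → ℝ) → ℂ
  num_trig : IsTrigPoly n num
  den_trig : IsTrigPoly n den
  den_ne : ∃ ξ, den ξ ≠ 0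

/-- Pointwise value of a rational trigonometric polynomial. -/
def RatTrigPoly.eval {n : ℕ} (f : RatTrigPoly n) (ξ : Fin n → ℝ) : ℂ := f.num ξ / f.den ξ

instance {n : ℕ} : CoeFun (RatTrigPoly n) (fun _ => (Fin n → ℝ) → ℂ) := ⟨RatTrigPoly.eval⟩

/-- `f` is defined at `ξ` iff its denominator does not vanish there. -/
def RatTrigPoly.DefinedAt {n : ℕ} (f : RatTrigPoly n) (ξ : Fin n → ℝ) : Prop := f.den ξ ≠ 0
lemma trig_per {n : ℕ} {f : (Fin n → ℝ) → ℂ} (hf : IsTrigPoly n f) (ξ η : Fin n → ℝ)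
    (k : Fin n → ℤ) (h : ∀ i, η i = ξ i + 2 * Real.pi * (k i : ℝ)) : f η = f ξ := by
  obtain ⟨F, c, hF⟩ := hf
  rw [hF, hF]
  refine Finset.sum_congr rfl fun l _ => ?_
  congr 1
  rw [Complex.exp_eq_exp_iff_exists_int]
  refine ⟨-∑ i, l i * k i, ?_⟩
  push_cast
  simp only [h]
  push_cast
  simp only [mul_add, Finset.sum_add_distrib, Finset.mul_sum, neg_mul, Finset.sum_mul,
    Finset.sum_neg_distrib]
  congr 1
  congr 1
  refine Finset.sum_congr rfl fun i _ => ?_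
  ring

lemma trig_an {n : ℕ} {f : (Fin n → ℝ) → ℂ} (hf : IsTrigPoly n f) :
    AnalyticOnNhd ℝ f Set.univ := by
  obtain ⟨F, c, hF⟩ := hf
  have : f = fun ξ => ∑ k ∈ F, c k * Complex.exp (-Complex.I * ∑ i, (k i : ℂ) * (ξ i : ℂ)) :=
    funext hF
  rw [this]
  have hco : ∀ i : Fin n, ∀ x, AnalyticAt ℝ (fun ξ : Fin n → ℝ => ((ξ i : ℝ) : ℂ)) x := by
    intro i x
    exact (Complex.ofRealCLM.comp (ContinuousLinearMap.proj (R := ℝ) i)).analyticAt x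
  intro x _
  refine Finset.analyticAt_fun_sum _ fun k _ => ?_
  refine analyticAt_const.mul ?_
  refine AnalyticAt.comp (g := Complex.exp)
    (f := fun ξ : Fin n → ℝ => -Complex.I * ∑ i, (k i : ℂ) * (ξ i : ℂ)) ?_ ?_
  · exact (analyticAt_cexp (z := _)).restrictScalars
  · refine analyticAt_const.mul ?_
    exact Finset.analyticAt_fun_sum _ fun i _ => analyticAt_const.mul (hco i x)

lemma trig_cont {n : ℕ} {f : (Fin n → ℝ) → ℂ} (hf : IsTrigPoly n f) : Continuous f := by
  rw [← continuousOn_univ]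
  exact (trig_an hf).continuousOn

lemma trig_dense {n : ℕ} {f : (Fin n → ℝ) → ℂ} (hf : IsTrigPoly n f) (h : ∃ ξ, f ξ ≠ 0) :
    Dense {ξ | f ξ ≠ 0} := by
  have : {ξ | f ξ ≠ 0} = {ξ | f ξ = 0}ᶜ := rfl
  rw [this, ← interior_eq_empty_iff_dense_compl, Set.eq_empty_iff_forall_notMem]
  intro x hx
  obtain ⟨ξ, hξ⟩ := h
  apply hξ
  have := (trig_an hf).eqOn_zero_of_preconnected_of_eventuallyEq_zero isPreconnected_univ
    (Set.mem_univ x) (mem_interior_iff_mem_nhds.mp hx)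
  exact this (Set.mem_univ ξ)

/-- The point `(ξ + 2πk)/λ^j`. -/
def ptt (lam n j : ℕ) (k : Fin n → ℤ) (ξ : Fin n → ℝ) : Fin n → ℝ :=
  fun i => (ξ i + 2 * Real.pi * (k i : ℝ)) / (lam : ℝ) ^ j

lemma ptt_cont (lam n j : ℕ) (k : Fin n → ℤ) : Continuous (ptt lam n j k) := by
  unfold ptt
  fun_prop

lemma ptt_dense {lam n : ℕ} (hlam : 2 ≤ lam) (j : ℕ) (k : Fin n → ℤ) {A : Set (Fin n → ℝ)}
    (hA : Dense A) : Dense (ptt lam n j k ⁻¹' A) := by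
  have h0 : (lam : ℝ) ^ j ≠ 0 := by positivity
  let e : (Fin n → ℝ) ≃ₜ (Fin n → ℝ) :=
    { toFun := ptt lam n j k
      invFun := fun ξ i => ξ i * (lam : ℝ) ^ j - 2 * Real.pi * (k i : ℝ)
      left_inv := by
        intro ξ
        funext i
        simp only [ptt]
        field_simp
        ring
      right_inv := by
        intro ξ
        funext i
        simp only [ptt]
        field_simp
        ring
      continuous_toFun := ptt_cont lam n j k
      continuous_invFun := by fun_prop }
  exact hA.preimage e.isOpenMap

lemma rat_per {n : ℕ} (f : RatTrigPoly n) (ξ η : Fin n → ℝ)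
    (k : Fin n → ℤ) (h : ∀ i, η i = ξ i + 2 * Real.pi * (k i : ℝ)) : f η = f ξ := by
  show f.num η / f.den η = f.num ξ / f.den ξ
  rw [trig_per f.num_trig ξ η k h, trig_per f.den_trig ξ η k h]

lemma rat_cont {n : ℕ} (f : RatTrigPoly n) (ξ : Fin n → ℝ) (h : f.DefinedAt ξ) :
    ContinuousAt (fun x => f x) ξ :=
  (trig_cont f.num_trig).continuousAt.div (trig_cont f.den_trig).continuousAt h

/-- Points where everything is defined. -/
def goodSet (lam n : ℕ) (S τ : RatTrigPoly n) : Set (Fin n → ℝ) :=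
  ⋂ p : ℕ × (Fin n → ℤ), ptt lam n p.1 p.2 ⁻¹'
    ({ξ | S.num ξ ≠ 0} ∩ ({ξ | S.den ξ ≠ 0} ∩ {ξ | τ.den ξ ≠ 0}))

lemma trig_open {n : ℕ} {f : (Fin n → ℝ) → ℂ} (hf : IsTrigPoly n f) : IsOpen {ξ | f ξ ≠ 0} :=
  isOpen_ne_fun (trig_cont hf) continuous_const

lemma goodSet_dense {lam n : ℕ} (hlam : 2 ≤ lam) (S τ : RatTrigPoly n)
    (hSne : ∃ ξ, S.DefinedAt ξ ∧ S ξ ≠ 0) : Dense (goodSet lam n S τ) := by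
  have hnum : ∃ ξ, S.num ξ ≠ 0 := by
    obtain ⟨ξ, _, h⟩ := hSne
    exact ⟨ξ, fun h0 => h (by show S.num ξ / S.den ξ = 0; rw [h0, zero_div])⟩
  have ho := ((trig_open S.num_trig).inter ((trig_open S.den_trig).inter (trig_open τ.den_trig)))
  apply dense_iInter_of_isOpen
  · intro p
    exact ho.preimage (ptt_cont _ _ _ _)
  · intro p
    apply ptt_dense hlam
    apply (trig_dense S.num_trig hnum).inter_of_isOpen_left _ (trig_open S.num_trig)
    exact (trig_dense S.den_trig S.den_ne).inter_of_isOpen_left (trig_dense τ.den_trig τ.den_ne)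
      (trig_open S.den_trig)

/-- The summand. -/
def gg (lam n : ℕ) (S τ : RatTrigPoly n) (m : ℕ) (ξ : Fin n → ℝ) (k : Fin n → ℤ) : ℝ :=
  (∏ j ∈ Finset.Icc 1 m, ‖τ (ptt lam n j k ξ)‖ ^ 2) * ((S (ptt lam n m k ξ)).re)⁻¹

lemma ptt_shift {lam n : ℕ} (hlam : 2 ≤ lam) {j m : ℕ} (hj : j ≤ m) (ξ : Fin n → ℝ)
    (k r l : Fin n → ℤ) (h : ∀ i, k i = r i + (lam : ℤ) ^ m * l i) (i : Fin n) :
    ptt lam n j k ξ i = ptt lam n j r ξ i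
      + 2 * Real.pi * (((lam : ℤ) ^ (m - j) * l i : ℤ) : ℝ) := by
  have h0 : (lam : ℝ) ≠ 0 := by positivity
  obtain ⟨d, rfl⟩ := Nat.exists_eq_add_of_le hj
  simp only [ptt, h, Nat.add_sub_cancel_left]
  push_cast
  field_simp
  ring

lemma gg_per {lam n : ℕ} (hlam : 2 ≤ lam) (S τ : RatTrigPoly n) (m : ℕ) (ξ : Fin n → ℝ)
    (k r l : Fin n → ℤ) (h : ∀ i, k i = r i + (lam : ℤ) ^ m * l i) :
    gg lam n S τ m ξ k = gg lam n S τ m ξ r := by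
  unfold gg
  rw [rat_per S _ _ _ (ptt_shift hlam le_rfl ξ k r l h)]
  congr 1
  refine Finset.prod_congr rfl fun j hj => ?_
  rw [rat_per τ _ _ _ (ptt_shift hlam (Finset.mem_Icc.mp hj).2 ξ k r l h)]

lemma sum_split {lam n : ℕ} (hlam : 2 ≤ lam) (m : ℕ) (g : (Fin n → ℤ) → ℝ) :
    ∑ k ∈ Lambda (lam ^ (m + 1)) n, g k =
      ∑ r ∈ Lambda (lam ^ m) n, ∑ ρ ∈ Lambda lam n, g (fun i => r i + (lam : ℤ) ^ m * ρ i) := by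
  have hp : (0 : ℤ) < (lam : ℤ) ^ m := by positivity
  rw [← Finset.sum_product']
  refine Finset.sum_nbij' (fun k => (fun i => k i % (lam : ℤ) ^ m, fun i => k i / (lam : ℤ) ^ m))
    (fun p => fun i => p.1 i + (lam : ℤ) ^ m * p.2 i) ?_ ?_ ?_ ?_ ?_
  · intro k hk
    simp only [Lambda, Fintype.mem_piFinset, Finset.mem_Ico, Finset.mem_product] at hk ⊢
    push_cast at hk ⊢
    refine ⟨fun i => ⟨Int.emod_nonneg _ hp.ne', Int.emod_lt_of_pos _ hp⟩, fun i => ⟨?_, ?_⟩⟩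
    · exact Int.ediv_nonneg (hk i).1 hp.le
    · apply Int.ediv_lt_of_lt_mul hp
      have := (hk i).2
      rw [pow_succ] at this
      linarith
  · rintro ⟨r, ρ⟩ hk
    simp only [Lambda, Fintype.mem_piFinset, Finset.mem_Ico, Finset.mem_product] at hk ⊢
    push_cast at hk ⊢
    intro i
    have h1 := hk.1 i
    have h2 := hk.2 i
    have h3 : ρ i + 1 ≤ lam := h2.2
    rw [pow_succ]
    constructor
    · have := mul_nonneg hp.le h2.1
      linarith [h1.1]
    · have := mul_le_mul_of_nonneg_left h3 hp.le
      linarith [h1.2]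
  · intro k _
    funext i
    exact Int.emod_add_mul_ediv _ _
  · rintro ⟨r, ρ⟩ hk
    simp only [Lambda, Fintype.mem_piFinset, Finset.mem_Ico, Finset.mem_product] at hk
    push_cast at hk
    refine Prod.ext (funext fun i => ?_) (funext fun i => ?_)
    · show (r i + (lam : ℤ) ^ m * ρ i) % (lam : ℤ) ^ m = r i
      rw [Int.add_mul_emod_self_left, Int.emod_eq_of_lt (hk.1 i).1 (hk.1 i).2]
    · show (r i + (lam : ℤ) ^ m * ρ i) / (lam : ℤ) ^ m = ρ i
      rw [Int.add_mul_ediv_left _ _ hp.ne', Int.ediv_eq_zero_of_lt (hk.1 i).1 (hk.1 i).2, zero_add]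
  · intro k _
    congr 1
    funext i
    exact (Int.emod_add_mul_ediv _ _).symm

lemma good_bound {lam n : ℕ} (hlam : 2 ≤ lam) (S τ : RatTrigPoly n)
    (hsubQMF : ∀ ξ : Fin n → ℝ,
      (S.DefinedAt (dil lam n ξ) ∧ S (dil lam n ξ) ≠ 0) →
      (∀ ρ ∈ Lambda lam n, τ.DefinedAt (gshift lam n ξ ρ) ∧
        S.DefinedAt (gshift lam n ξ ρ) ∧ S (gshift lam n ξ ρ) ≠ 0) →
      0 ≤ ((S (dil lam n ξ)).re)⁻¹
          - ∑ ρ ∈ Lambda lam n,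
              ‖τ (gshift lam n ξ ρ)‖ ^ 2 / (S (gshift lam n ξ ρ)).re)
    (η : Fin n → ℝ) (hη : η ∈ goodSet lam n S τ) (m : ℕ) :
    ∑ k ∈ Lambda (lam ^ m) n, gg lam n S τ m η k ≤ ((S η).re)⁻¹ := by
  have h0 : (lam : ℝ) ≠ 0 := by positivity
  have hg : ∀ j k, S.DefinedAt (ptt lam n j k η) ∧ S (ptt lam n j k η) ≠ 0 ∧
      τ.DefinedAt (ptt lam n j k η) := by
    intro j k
    have := Set.mem_iInter.mp hη (j, k)
    exact ⟨this.2.1, div_ne_zero this.1 this.2.1, this.2.2⟩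
  induction m with
  | zero =>
    have hL : Lambda (lam ^ 0) n = {0} := by
      ext k
      simp only [Lambda, Fintype.mem_piFinset, Finset.mem_Ico, Finset.mem_singleton, pow_zero,
        Nat.cast_one, funext_iff, Pi.zero_apply]
      exact forall_congr' fun i => by omega
    have hp : ptt lam n 0 0 η = η := by
      funext i
      simp [ptt]
    rw [hL, Finset.sum_singleton]
    simp [gg, hp]
  | succ m ih =>
    refine le_trans ?_ ih
    rw [sum_split hlam]
    refine Finset.sum_le_sum fun r _ => ?_
    set ζ := ptt lam n (m + 1) r η with hζ
    have hd : dil lam n ζ = ptt lam n m r η := by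
      funext i
      simp only [dil, hζ, ptt, pow_succ]
      field_simp
    have hs : ∀ ρ : Fin n → ℤ, gshift lam n ζ ρ
        = ptt lam n (m + 1) (fun i => r i + (lam : ℤ) ^ m * ρ i) η := by
      intro ρ
      funext i
      simp only [gshift, hζ, ptt, pow_succ]
      push_cast
      field_simp
      ring
    have key := hsubQMF ζ (by rw [hd]; exact ⟨(hg _ _).1, (hg _ _).2.1⟩)
      (by intro ρ _; rw [hs]; exact ⟨(hg _ _).2.2, (hg _ _).1, (hg _ _).2.1⟩)
    rw [hd] at key
    have hterm : ∀ ρ : Fin n → ℤ, gg lam n S τ (m + 1) η (fun i => r i + (lam : ℤ) ^ m * ρ i)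
        = (∏ j ∈ Finset.Icc 1 m, ‖τ (ptt lam n j r η)‖ ^ 2) *
          (‖τ (gshift lam n ζ ρ)‖ ^ 2 / (S (gshift lam n ζ ρ)).re) := by
      intro ρ
      unfold gg
      rw [Finset.prod_Icc_succ_top (by omega), hs, mul_assoc, div_eq_mul_inv]
      congr 1
      refine Finset.prod_congr rfl fun j hj => ?_
      rw [rat_per τ _ _ _ (ptt_shift hlam (Finset.mem_Icc.mp hj).2 η _ r ρ fun i => rfl)]
    simp only [hterm]
    rw [← Finset.mul_sum]
    unfold gg
    exact mul_le_mul_of_nonneg_left (by linarith)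
      (Finset.prod_nonneg fun _ _ => by positivity)

/-- under the oblique sub-QMF condition, the cascade-type functions
f_m(ξ) = χ_{[−λ^mπ,λ^mπ)ⁿ}(ξ)·S(λ^{−m}ξ)^{−1/2}·Π_{j=1}^m τ(λ^{−j}ξ) satisfy the
bracket-product bound [f_m, f_m](ξ) ≤ 1/S(ξ) wherever both sides are defined. -/
theorem bracket_product_bound (lam n : ℕ) (hlam : 2 ≤ lam) (hn : 1 ≤ n)
    (S : RatTrigPoly n)
    (hSreal : ∀ ξ, S.DefinedAt ξ → (S ξ).im = 0 ∧ 0 ≤ (S ξ).re)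
    (hSne : ∃ ξ, S.DefinedAt ξ ∧ S ξ ≠ 0)
    (τ : RatTrigPoly n) (hτdef : τ.DefinedAt 0) (hτ0 : τ 0 = 1)
    (hsubQMF : ∀ ξ : Fin n → ℝ,
      (S.DefinedAt (dil lam n ξ) ∧ S (dil lam n ξ) ≠ 0) →
      (∀ ρ ∈ Lambda lam n, τ.DefinedAt (gshift lam n ξ ρ) ∧
        S.DefinedAt (gshift lam n ξ ρ) ∧ S (gshift lam n ξ ρ) ≠ 0) →
      0 ≤ ((S (dil lam n ξ)).re)⁻¹
          - ∑ ρ ∈ Lambda lam n,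
              ‖τ (gshift lam n ξ ρ)‖ ^ 2 / (S (gshift lam n ξ ρ)).re)
    (f : ℕ → (Fin n → ℝ) → ℂ)
    (hf : ∀ (m : ℕ) (ξ : Fin n → ℝ),
      f m ξ = (Set.indicator
          {η : Fin n → ℝ | ∀ i, -((lam : ℝ) ^ m * Real.pi) ≤ η i ∧
            η i < (lam : ℝ) ^ m * Real.pi} (fun _ => (1 : ℂ)) ξ) *
        ((Real.sqrt ((S (fun i => ξ i / (lam : ℝ) ^ m)).re))⁻¹ : ℂ) *
        ∏ j ∈ Finset.Icc 1 m, τ (fun i => ξ i / (lam : ℝ) ^ j)) :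
    ∀ (m : ℕ) (ξ : Fin n → ℝ),
      (S.DefinedAt ξ ∧ S ξ ≠ 0) →
      (∀ k : Fin n → ℤ,
        (S.DefinedAt (fun i => (ξ i + 2 * Real.pi * (k i : ℝ)) / (lam : ℝ) ^ m) ∧
          S (fun i => (ξ i + 2 * Real.pi * (k i : ℝ)) / (lam : ℝ) ^ m) ≠ 0) ∧
        ∀ j ∈ Finset.Icc 1 m,
          τ.DefinedAt (fun i => (ξ i + 2 * Real.pi * (k i : ℝ)) / (lam : ℝ) ^ j)) →
      (∑' k : Fin n → ℤ, ‖f m (fun i => ξ i + 2 * Real.pi * (k i : ℝ))‖ ^ 2)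
        ≤ ((S ξ).re)⁻¹ := by
  intro m ξ hξ hk
  have h0 : (lam : ℝ) ≠ 0 := by positivity
  have hk' : ∀ k, (S.DefinedAt (ptt lam n m k ξ) ∧ S (ptt lam n m k ξ) ≠ 0) ∧
      ∀ j ∈ Finset.Icc 1 m, τ.DefinedAt (ptt lam n j k ξ) := hk
  have hre : ∀ x, S.DefinedAt x ∧ S x ≠ 0 → (S x).re ≠ 0 := by
    intro x hx h
    exact hx.2 (Complex.ext h (hSreal x hx.1).1)
  -- the finite sum is bounded
  have hfin : ∑ k ∈ Lambda (lam ^ m) n, gg lam n S τ m ξ k ≤ ((S ξ).re)⁻¹ := by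
    have hcl : ξ ∈ closure (goodSet lam n S τ) := goodSet_dense hlam S τ hSne ξ
    have hnb := mem_closure_iff_nhdsWithin_neBot.mp hcl
    have hc1 : ContinuousAt (fun x => ∑ k ∈ Lambda (lam ^ m) n, gg lam n S τ m x k) ξ := by
      refine tendsto_finsetSum _ fun k _ => ?_
      have hS : ContinuousAt (fun x => S (ptt lam n m k x)) ξ :=
        ContinuousAt.comp (g := fun x => S x) (rat_cont S _ (hk' k).1.1)
          (ptt_cont _ _ _ _).continuousAt
      refine Filter.Tendsto.mul ?_ ?_
      · refine tendsto_finsetProd _ fun j hj => ?_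
        have : ContinuousAt (fun x => τ (ptt lam n j k x)) ξ :=
          ContinuousAt.comp (g := fun x => τ x) (rat_cont τ _ ((hk' k).2 j hj))
            (ptt_cont _ _ _ _).continuousAt
        exact this.norm.pow 2
      · exact (Complex.continuous_re.continuousAt.comp hS).inv₀ (hre _ (hk' k).1)
    have hc2 : ContinuousAt (fun x => ((S x).re)⁻¹) ξ :=
      (Complex.continuous_re.continuousAt.comp (rat_cont S ξ hξ.1)).inv₀ (hre _ hξ)
    refine le_of_tendsto_of_tendsto (b := 𝓝[goodSet lam n S τ] ξ) (hc1.mono_left nhdsWithin_le_nhds)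
      (hc2.mono_left nhdsWithin_le_nhds) ?_
    filter_upwards [self_mem_nhdsWithin] with η hη
    exact good_bound hlam S τ hsubQMF η hη m
  have hgn : ∀ k, 0 ≤ gg lam n S τ m ξ k := fun k =>
    mul_nonneg (Finset.prod_nonneg fun _ _ => by positivity)
      (inv_nonneg.mpr (hSreal _ (hk' k).1.1).2)
  set B : Set (Fin n → ℝ) := {η : Fin n → ℝ | ∀ i, -((lam : ℝ) ^ m * Real.pi) ≤ η i ∧
            η i < (lam : ℝ) ^ m * Real.pi} with hB
  have hin : ∀ k : Fin n → ℤ, (fun i => ξ i + 2 * Real.pi * (k i : ℝ)) ∈ B →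
      ‖f m (fun i => ξ i + 2 * Real.pi * (k i : ℝ))‖ ^ 2 = gg lam n S τ m ξ k := by
    intro k hkB
    rw [hf, Set.indicator_of_mem hkB, one_mul, norm_mul, mul_pow, norm_inv, Complex.norm_real,
      Real.norm_eq_abs, abs_of_nonneg (Real.sqrt_nonneg _), inv_pow,
      Real.sq_sqrt (hSreal _ (hk k).1.1).2, norm_prod, ← Finset.prod_pow, mul_comm]
    rfl
  have hout : ∀ k : Fin n → ℤ, (fun i => ξ i + 2 * Real.pi * (k i : ℝ)) ∉ B →
      ‖f m (fun i => ξ i + 2 * Real.pi * (k i : ℝ))‖ ^ 2 = 0 := by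
    intro k hkB
    rw [hf, Set.indicator_of_notMem hkB]
    simp
  refine le_trans (Real.tsum_le_of_sum_le (fun k => by positivity) fun s => ?_) hfin
  classical
  rw [← Finset.sum_filter_add_sum_filter_not s
    (fun k : Fin n → ℤ => (fun i => ξ i + 2 * Real.pi * (k i : ℝ)) ∈ B)]
  rw [Finset.sum_eq_zero (s := s.filter _) (fun k hk => hout k (Finset.mem_filter.mp hk).2),
    add_zero, Finset.sum_congr rfl (fun k hk => hin k (Finset.mem_filter.mp hk).2)]
  have hp : (0 : ℤ) < (lam : ℤ) ^ m := by positivity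
  have hmod : ∀ k, gg lam n S τ m ξ k = gg lam n S τ m ξ (fun i => k i % (lam : ℤ) ^ m) := by
    intro k
    exact gg_per hlam S τ m ξ k _ (fun i => k i / (lam : ℤ) ^ m)
      fun i => (Int.emod_add_mul_ediv _ _).symm
  rw [Finset.sum_congr rfl (fun k _ => hmod k)]
  rw [← Finset.sum_image (g := fun (k : Fin n → ℤ) i => k i % (lam : ℤ) ^ m)
    (f := gg lam n S τ m ξ)]
  · refine Finset.sum_le_sum_of_subset_of_nonneg ?_ fun k _ _ => hgn k
    intro r hr
    obtain ⟨k, _, rfl⟩ := Finset.mem_image.mp hr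
    simp only [Lambda, Fintype.mem_piFinset, Finset.mem_Ico]
    push_cast
    exact fun i => ⟨Int.emod_nonneg _ hp.ne', Int.emod_lt_of_pos _ hp⟩
  · intro k hk l hl hkl
    have hkB := (Finset.mem_filter.mp (Finset.mem_coe.mp hk)).2
    have hlB := (Finset.mem_filter.mp (Finset.mem_coe.mp hl)).2
    funext i
    have hi : k i % (lam : ℤ) ^ m = l i % (lam : ℤ) ^ m := congrFun hkl i
    have h1 := hkB i
    have h2 := hlB i
    simp only at h1 h2
    have hpi := Real.pi_pos
    have a1 : (k i : ℝ) - l i < (lam : ℝ) ^ m := by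
      by_contra h
      push Not at h
      have := mul_le_mul_of_nonneg_left h hpi.le
      nlinarith [h1.2, h2.1]
    have a2 : (l i : ℝ) - k i < (lam : ℝ) ^ m := by
      by_contra h
      push Not at h
      have := mul_le_mul_of_nonneg_left h hpi.le
      nlinarith [h2.2, h1.1]
    have b1 : k i - l i < (lam : ℤ) ^ m := by exact_mod_cast a1
    have b2 : l i - k i < (lam : ℤ) ^ m := by exact_mod_cast a2
    have hdvd : (lam : ℤ) ^ m ∣ k i - l i := Int.ModEq.dvd (Int.ModEq.symm hi)
    have := Int.eq_zero_of_abs_lt_dvd hdvd (abs_lt.mpr ⟨by linarith, b1⟩)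
    linarith
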